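/- arXiv:1601.04664 — 2 statements merged into one kernel-verified Lean document; each statement's English description precedes it below -/
import Mathlib

section
/- Let x, y ∈ ℝⁿ with ‖x‖ = ‖y‖ = 1 and x + y ≠ 0, and set c = (x + y)/‖x + y‖. Then ⟨c, x⟩ > 0, ⟨c, y⟩ > 0, and (x/⟨c, x⟩ − c) + (y/⟨c, y⟩ − c) = 0. That is, with the sphere retraction φ_c(v) = (c+v)/‖c+v‖ and its inverse φ_c⁻¹(z) = z/⟨c,z⟩ − c, the geodesic midpoint c = (x+y)/‖x+y‖ satisfies the symmetry condition φ_c⁻¹(x) + φ_c⁻¹(y) = 0. -/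
/-!
For unit vectors, `‖x + y‖² = 2 (1 + ⟪x, y⟫)`, so both `⟪c, x⟫` and `⟪c, y⟫` equal
`(1 + ⟪x, y⟫) / ‖x + y‖ = ‖x + y‖ / 2`, which is positive. The two inverse retractions then
add up to `(2 / ‖x + y‖) • (x + y) - 2 • c = 0`.
-/

/- STATEMENT 11: the geodesic midpoint `c = (x+y)/‖x+y‖` on the unit sphere satisfies
`⟨c,x⟩ > 0`, `⟨c,y⟩ > 0` and `φ_c⁻¹(x) + φ_c⁻¹(y) = 0`, i.e.
`(x/⟨c,x⟩ - c) + (y/⟨c,y⟩ - c) = 0`. -/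

open scoped RealInnerProductSpace

theorem sphere_midpoint_symmetry (n : ℕ) (x y c : EuclideanSpace ℝ (Fin n))
    (hx : ‖x‖ = 1) (hy : ‖y‖ = 1) (hxy : x + y ≠ 0)
    (hc : c = ‖x + y‖⁻¹ • (x + y)) :
    0 < ⟪c, x⟫ ∧ 0 < ⟪c, y⟫ ∧
      ((⟪c, x⟫)⁻¹ • x - c) + ((⟪c, y⟫)⁻¹ • y - c) = 0 := by
  have hs : 0 < ‖x + y‖ := norm_pos_iff.mpr hxy
  have hsq : ‖x + y‖ ^ 2 = 2 * (1 + ⟪x, y⟫) := by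
    rw [norm_add_sq_real, hx, hy]; ring
  have hcx : ⟪c, x⟫ = ‖x + y‖ / 2 := by
    rw [hc, real_inner_smul_left, inner_add_left, real_inner_self_eq_norm_sq, hx,
      real_inner_comm x y]
    field_simp
    linarith
  have hcy : ⟪c, y⟫ = ‖x + y‖ / 2 := by
    rw [hc, real_inner_smul_left, inner_add_left, real_inner_self_eq_norm_sq, hy]
    field_simp
    linarith
  refine ⟨by rw [hcx]; positivity, by rw [hcy]; positivity, ?_⟩
  rw [hcx, hcy, hc, inv_div, div_eq_mul_inv]
  module
end

section
/- For every integer n ≥ 1, Σ_{d ∣ gcd(n, 2)} μ(d) · ((n+2)/d)! / ((n/d)! · (2/d)!) = (n + 2) · ⌊(n+1)/2⌋, where μ denotes the Möbius function and the sum runs over the positive divisors d of gcd(n, 2). -/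
/-!
The quotient of factorials at `d = 1` is the binomial coefficient `(n + 2).choose 2`, with value
`(n + 2) * (n + 1) / 2`. For odd `n` this is the only term, and `(n + 1) / 2` is exact. For even
`n = 2 * m` the divisor `d = 2` contributes `-(m + 1)`, and
`(m + 1) * (2 * m + 1) - (m + 1) = (2 * m + 2) * m`, where `m` is the floor of `(n + 1) / 2`.
-/

/- STATEMENT 15: the generalized Witt formula evaluation `c(n,2) = ⌊(n+1)/2⌋`:
for `n ≥ 1`,
`∑_{d ∣ gcd(n,2)} μ(d) · ((n+2)/d)! / ((n/d)!·(2/d)!) = (n+2)·⌊(n+1)/2⌋`. -/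

open scoped ArithmeticFunction

theorem factorial_add_two_div (n k : ℕ) (h : (n + 2) * (n + 1) = 2 * k) :
    (n + 2).factorial / (n.factorial * Nat.factorial 2) = k := by
  apply Nat.div_eq_of_eq_mul_right (by positivity)
  rw [Nat.factorial_succ, Nat.factorial_succ, Nat.factorial_two]
  linear_combination n.factorial * h

theorem factorial_succ_div (m : ℕ) :
    (m + 1).factorial / (m.factorial * Nat.factorial 1) = m + 1 := by
  apply Nat.div_eq_of_eq_mul_right (by positivity)
  rw [Nat.factorial_succ, Nat.factorial_one]
  ring

theorem witt_formula_c_n_two (n : ℕ) (hn : 1 ≤ n) :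
    ∑ d ∈ (Nat.gcd n 2).divisors,
        (ArithmeticFunction.moebius d : ℤ) *
          ((((n + 2) / d).factorial / ((n / d).factorial * ((2 / d).factorial)) : ℕ) : ℤ) =
      ((n + 2) * ((n + 1) / 2) : ℕ) := by
  obtain ⟨m, rfl | rfl⟩ := Nat.even_or_odd' n
  · have hg : Nat.gcd (2 * m) 2 = 2 := Nat.gcd_eq_right (Dvd.intro m rfl)
    have h1 : (2 * m + 2) / 2 = m + 1 := by omega
    have h2 : 2 * m / 2 = m := by omega
    have h3 : (2 * m + 1) / 2 = m := by omega
    rw [hg, Nat.prime_two.sum_divisors, ArithmeticFunction.moebius_apply_prime Nat.prime_two,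
      ArithmeticFunction.moebius_apply_one, h1, h2, h3, Nat.div_one, Nat.div_one, Nat.div_one,
      Nat.div_self two_pos, factorial_succ_div,
      factorial_add_two_div (2 * m) ((m + 1) * (2 * m + 1)) (by ring)]
    push_cast
    ring
  · have hg : Nat.gcd (2 * m + 1) 2 = 1 := by simp
    have h3 : (2 * m + 1 + 1) / 2 = m + 1 := by omega
    rw [hg, Nat.divisors_one, Finset.sum_singleton, ArithmeticFunction.moebius_apply_one, h3,
      Nat.div_one, Nat.div_one, Nat.div_one,
      factorial_add_two_div (2 * m + 1) ((2 * m + 3) * (m + 1)) (by ring)]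
    push_cast
    ring
end
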